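/- Let I be a non-degenerate, closed, and bounded interval, let f_n : I → I be a C² map for each n ≥ 0, and let x_0 ∈ I. Assume that {f_n″}_{n=0}^∞ is uniformly bounded on I. If the limit λ(x_0) = lim_{n→∞} (1/n) Σ_{k=0}^{n−1} ln|f_k′(x_k)| exists and satisfies −∞ < λ(x_0) < 0 (equivalently, the limsup and liminf of (1/n) Σ_{k=0}^{n−1} ln|f_k′(x_k)| are equal and lie in (−∞, 0)), then the system x_{n+1} = f_n(x_n) is exponentially asymptotically stable at x_0. -/

import Mathlib

open Filter Topology

/-- Iterates of a non-autonomous system: `iterSeq f n = f_{n-1} ∘ ⋯ ∘ f_0`. -/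
def iterSeq {X : Type*} (f : ℕ → X → X) : ℕ → X → X
  | 0 => id
  | n + 1 => f n ∘ iterSeq f n

/-- The Lyapunov exponent `λ(x0) := limsup (1/n) ∑_{k<n} ln|f_k'(x_k)|` (in the
extended reals), where `x_k = f_0^k(x0)` is the orbit of `x0`. -/
noncomputable def lyapExpSup (f f' : ℕ → ℝ → ℝ) (x0 : ℝ) : EReal :=
  Filter.limsup (fun n : ℕ => ((1 / (n:ℝ)) * ∑ k ∈ Finset.range n,
    Real.log |f' k (iterSeq f k x0)| : EReal)) Filter.atTop

/-- The lower Lyapunov exponent `λ₀(x0) := liminf (1/n) ∑_{k<n} ln|f_k'(x_k)|`. -/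
noncomputable def lyapExpInf (f f' : ℕ → ℝ → ℝ) (x0 : ℝ) : EReal :=
  Filter.liminf (fun n : ℕ => ((1 / (n:ℝ)) * ∑ k ∈ Finset.range n,
    Real.log |f' k (iterSeq f k x0)| : EReal)) Filter.atTop

/-!
Let `e n` be the distance at time `n` between the orbits of `y₀` and `x₀`, and let `S n` be the sum
of the `log |f_k'(x_k)|` over `k < n`. Taylor's formula gives
`e (n + 1) ≤ exp (S (n + 1) - S n) * e n + M * e n ^ 2`, so that `w n = e n * exp (-S n)` satisfies
`w (n + 1) ≤ w n + c n * w n ^ 2` with `c n = M * exp (2 * S n - S (n + 1))`. If the exponents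
satisfy `2 λ < λ₀`, which follows from `-∞ < λ = λ₀ < 0`, then `c` is summable; hence `w` stays
below `2 * ε` as soon as `w 0 ≤ ε` for a small `ε`, and `e n ≤ 2 * ε * exp (S n)` decays
exponentially because `λ < 0`.
-/

open LinearGrowth
open scoped NNReal

/-- The system `x_{n+1} = f_n(x_n)` is exponentially asymptotically stable at `x₀` with respect to
perturbations of the initial value inside `s`. -/
def ExpAsymptoticallyStableOn {X : Type*} [PseudoMetricSpace X] (f : ℕ → X → X) (s : Set X)
    (x₀ : X) : Prop :=
  ∃ δ > (0 : ℝ), ∃ C > (0 : ℝ), ∃ μ > (0 : ℝ), ∀ n : ℕ, ∀ y₀ ∈ s,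
    dist y₀ x₀ < δ → dist (iterSeq f n y₀) (iterSeq f n x₀) ≤ C * Real.exp (-μ * n)

/-- The logarithm `∑_{k<n} log ‖f_k'(x_k)‖` of the product of the derivative norms along the orbit
of `x₀`, whose linear growth rates are the Lyapunov exponents. Since `Real.log 0 = 0`, vanishing
derivatives count as factors `1`. The codomain `F` of `f'` is arbitrary, so that scalar derivatives
and Fréchet derivatives are both covered. -/
noncomputable def logDerivSum {X F : Type*} [Norm F] (f : ℕ → X → X) (f' : ℕ → X → F) (x₀ : X)
    (n : ℕ) : ℝ :=
  ∑ k ∈ Finset.range n, Real.log ‖f' k (iterSeq f k x₀)‖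

lemma lyapExpSup_eq_linearGrowthSup (f f' : ℕ → ℝ → ℝ) (x₀ : ℝ) :
    lyapExpSup f f' x₀ = linearGrowthSup fun n ↦ (logDerivSum f f' x₀ n : EReal) := by
  simp only [lyapExpSup, linearGrowthSup, logDerivSum, Real.norm_eq_abs, EReal.div_eq_inv_mul,
    one_div, EReal.coe_natCast]

lemma lyapExpInf_eq_linearGrowthInf (f f' : ℕ → ℝ → ℝ) (x₀ : ℝ) :
    lyapExpInf f f' x₀ = linearGrowthInf fun n ↦ (logDerivSum f f' x₀ n : EReal) := by
  simp only [lyapExpInf, linearGrowthInf, logDerivSum, Real.norm_eq_abs, EReal.div_eq_inv_mul,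
    one_div, EReal.coe_natCast]

lemma mapsTo_iterSeq {X : Type*} {f : ℕ → X → X} {s : Set X}
    (hf : ∀ n, Set.MapsTo (f n) s s) (n : ℕ) : Set.MapsTo (iterSeq f n) s s := by
  induction n with
  | zero => exact Set.mapsTo_id s
  | succ n ih => exact (hf n).comp ih

section QuadraticRecurrence

lemma le_two_mul_of_le_add_mul_sq {w c : ℕ → ℝ} {ε : ℝ} (hw : ∀ n, 0 ≤ w n) (hc : ∀ n, 0 ≤ c n)
    (hε : ∀ n, 4 * ε * ∑ k ∈ Finset.range n, c k ≤ 1) (hw₀ : w 0 ≤ ε)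
    (hstep : ∀ n, w (n + 1) ≤ w n + c n * w n ^ 2) (n : ℕ) : w n ≤ 2 * ε := by
  have hε₀ : 0 ≤ ε := (hw 0).trans hw₀
  have bound_le (n : ℕ) : ε + 4 * ε ^ 2 * ∑ k ∈ Finset.range n, c k ≤ 2 * ε :=
    calc ε + 4 * ε ^ 2 * ∑ k ∈ Finset.range n, c k
        = ε + ε * (4 * ε * ∑ k ∈ Finset.range n, c k) := by ring
      _ ≤ ε + ε * 1 := by gcongr; exact hε n
      _ = 2 * ε := by ring
  -- The bound `2 * ε` is not inductive by itself: each step adds at most `c n * (2 * ε) ^ 2`.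
  suffices h : w n ≤ ε + 4 * ε ^ 2 * ∑ k ∈ Finset.range n, c k from h.trans (bound_le n)
  induction n with
  | zero => simpa using hw₀
  | succ n ih =>
    calc w (n + 1) ≤ w n + c n * w n ^ 2 := hstep n
      _ ≤ (ε + 4 * ε ^ 2 * ∑ k ∈ Finset.range n, c k) + c n * (2 * ε) ^ 2 := by
        gcongr
        exacts [hc n, hw n, ih.trans (bound_le n)]
      _ = ε + 4 * ε ^ 2 * ∑ k ∈ Finset.range (n + 1), c k := by
        rw [Finset.sum_range_succ]; ring

lemma le_two_mul_exp_of_le_exp_mul_add_mul_sq {e S : ℕ → ℝ} {K ε : ℝ} (he : ∀ n, 0 ≤ e n)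
    (hK : 0 ≤ K) (hε : ∀ n, 4 * ε * ∑ k ∈ Finset.range n, K * Real.exp (2 * S k - S (k + 1)) ≤ 1)
    (he₀ : e 0 ≤ ε * Real.exp (S 0))
    (hstep : ∀ n, e (n + 1) ≤ Real.exp (S (n + 1) - S n) * e n + K * e n ^ 2) (n : ℕ) :
    e n ≤ 2 * ε * Real.exp (S n) := by
  have hnorm : e n * Real.exp (-S n) ≤ 2 * ε := by
    refine le_two_mul_of_le_add_mul_sq (w := fun n ↦ e n * Real.exp (-S n))
      (fun n ↦ mul_nonneg (he n) (Real.exp_pos _).le) (fun n ↦ mul_nonneg hK (Real.exp_pos _).le)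
      hε ?_ (fun n ↦ ?_) n
    · rwa [Real.exp_neg, ← div_eq_mul_inv, div_le_iff₀ (Real.exp_pos _)]
    · calc e (n + 1) * Real.exp (-S (n + 1))
          ≤ (Real.exp (S (n + 1) - S n) * e n + K * e n ^ 2) * Real.exp (-S (n + 1)) := by
            gcongr; exact hstep n
        _ = e n * Real.exp (-S n)
            + K * Real.exp (2 * S n - S (n + 1)) * (e n * Real.exp (-S n)) ^ 2 := by
            simp only [two_mul, Real.exp_sub, Real.exp_add, Real.exp_neg]
            field_simp
  rwa [Real.exp_neg, ← div_eq_mul_inv, div_le_iff₀ (Real.exp_pos _)] at hnorm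

end QuadraticRecurrence

section LinearGrowth

variable {S : ℕ → ℝ}

lemma ereal_two_mul_lt_self_iff {x : EReal} : 2 * x < x ↔ ⊥ < x ∧ x < 0 := by
  rw [show (2 : EReal) = (2 : ℝ) from rfl]
  induction x with
  | bot => simp
  | top => simp [EReal.coe_mul_top_of_pos]
  | coe x =>
    simp only [EReal.bot_lt_coe, true_and]
    norm_cast
    exact ⟨fun h ↦ by linarith, fun h ↦ by linarith⟩

lemma exists_lt_and_lt_of_two_mul_lt {x y : EReal} (h : 2 * x < y) :
    ∃ u v : ℝ, x < u ∧ v < y ∧ 2 * u < v := by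
  obtain ⟨v, hxv, hvy⟩ := EReal.lt_iff_exists_real_btwn.1 h
  obtain ⟨r, hxr, hrv⟩ := EReal.lt_iff_exists_real_btwn.1 hxv
  refine ⟨r / 2, v, ?_, hvy, ?_⟩
  · rw [EReal.coe_div, EReal.lt_div_iff (EReal.coe_pos.2 two_pos) (EReal.coe_ne_top 2), mul_comm]
    exact hxr
  · rw [EReal.coe_lt_coe_iff] at hrv; linarith

lemma eventually_le_mul_of_linearGrowthSup_lt {u : ℝ}
    (h : linearGrowthSup (fun n ↦ (S n : EReal)) < u) : ∀ᶠ n : ℕ in atTop, S n ≤ u * n :=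
  (eventually_le_mul h).mono fun n hn ↦ by exact_mod_cast hn

lemma eventually_mul_le_of_lt_linearGrowthInf {v : ℝ}
    (h : v < linearGrowthInf (fun n ↦ (S n : EReal))) : ∀ᶠ n : ℕ in atTop, v * n ≤ S n :=
  (eventually_mul_le h).mono fun n hn ↦ by exact_mod_cast hn

lemma exists_le_sub_mul_of_linearGrowthSup_neg
    (h : linearGrowthSup (fun n ↦ (S n : EReal)) < 0) :
    ∃ μ > 0, ∃ B, ∀ n : ℕ, S n ≤ B - μ * n := by
  obtain ⟨u, hSu, hu⟩ := EReal.lt_iff_exists_real_btwn.1 h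
  have hbdd : IsBoundedUnder (· ≤ ·) atTop fun n : ℕ ↦ S n - u * n :=
    isBoundedUnder_of_eventually_le (a := 0) <|
      (eventually_le_mul_of_linearGrowthSup_lt hSu).mono fun n hn ↦ sub_nonpos.2 hn
  obtain ⟨B, hB⟩ := hbdd.bddAbove_range
  refine ⟨-u, neg_pos.2 (EReal.coe_neg'.1 hu), B, fun n ↦ ?_⟩
  linarith [hB ⟨n, rfl⟩]

lemma summable_exp_two_mul_sub_succ
    (h : 2 * linearGrowthSup (fun n ↦ (S n : EReal)) < linearGrowthInf fun n ↦ (S n : EReal)) :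
    Summable fun n ↦ Real.exp (2 * S n - S (n + 1)) := by
  obtain ⟨u, v, hu, hv, huv⟩ := exists_lt_and_lt_of_two_mul_lt h
  have hgeom : Summable fun n : ℕ ↦ Real.exp (-v) * Real.exp (n * (2 * u - v)) :=
    (Real.summable_exp_nat_mul_iff.2 (sub_neg.2 huv)).mul_left _
  refine hgeom.of_norm_bounded_eventually_nat ?_
  filter_upwards [eventually_le_mul_of_linearGrowthSup_lt hu,
    (tendsto_add_atTop_nat 1).eventually (eventually_mul_le_of_lt_linearGrowthInf hv)] with n hn hn'
  rw [Real.norm_eq_abs, Real.abs_exp, ← Real.exp_add, Real.exp_le_exp]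
  push_cast at hn'
  linarith

end LinearGrowth

lemma exists_pos_mul_sum_range_le_one {a : ℝ} (ha : 0 < a) {c : ℕ → ℝ} (hc : ∀ n, 0 ≤ c n)
    (hsum : Summable c) : ∃ ε > 0, ∀ n, a * ε * ∑ k ∈ Finset.range n, c k ≤ 1 := by
  have hS : 0 ≤ ∑' k, c k := tsum_nonneg hc
  refine ⟨(a * (∑' k, c k + 1))⁻¹, by positivity, fun n ↦ ?_⟩
  have hle : ∑ k ∈ Finset.range n, c k ≤ ∑' k, c k + 1 :=
    (hsum.sum_le_tsum _ fun k _ ↦ hc k).trans (le_add_of_nonneg_right zero_le_one)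
  rw [mul_inv, mul_inv_cancel_left₀ ha.ne']
  exact inv_mul_le_one_of_le₀ hle (by positivity)

theorem expAsymptoticallyStableOn_of_dist_le {X : Type*} [PseudoMetricSpace X] {f : ℕ → X → X}
    {s : Set X} {x₀ : X} {S : ℕ → ℝ} {K : ℝ} (hK : 0 ≤ K) (hmaps : ∀ n, Set.MapsTo (f n) s s)
    (hstep : ∀ n, ∀ y ∈ s, dist (f n y) (f n (iterSeq f n x₀)) ≤
      Real.exp (S (n + 1) - S n) * dist y (iterSeq f n x₀) + K * dist y (iterSeq f n x₀) ^ 2)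
    (hgap : 2 * linearGrowthSup (fun n ↦ (S n : EReal)) < linearGrowthInf fun n ↦ (S n : EReal)) :
    ExpAsymptoticallyStableOn f s x₀ := by
  have hneg : linearGrowthSup (fun n ↦ (S n : EReal)) < 0 :=
    (ereal_two_mul_lt_self_iff.1 (hgap.trans_le linearGrowthInf_le_linearGrowthSup)).2
  obtain ⟨μ, hμ, B, hB⟩ := exists_le_sub_mul_of_linearGrowthSup_neg hneg
  obtain ⟨ε, hε, hsum⟩ := exists_pos_mul_sum_range_le_one four_pos
    (fun n ↦ mul_nonneg hK (Real.exp_pos _).le) ((summable_exp_two_mul_sub_succ hgap).mul_left K)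
  refine ⟨ε * Real.exp (S 0), by positivity, 2 * ε * Real.exp B, by positivity, μ, hμ,
    fun n y₀ hy₀ hlt ↦ ?_⟩
  calc dist (iterSeq f n y₀) (iterSeq f n x₀)
      ≤ 2 * ε * Real.exp (S n) :=
        le_two_mul_exp_of_le_exp_mul_add_mul_sq
          (e := fun n ↦ dist (iterSeq f n y₀) (iterSeq f n x₀)) (fun _ ↦ dist_nonneg) hK hsum
          hlt.le (fun n ↦ hstep n _ (mapsTo_iterSeq hmaps n hy₀)) n
    _ ≤ 2 * ε * Real.exp (B - μ * n) := by gcongr; exact hB n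
    _ = 2 * ε * Real.exp B * Real.exp (-μ * n) := by
        rw [mul_assoc (2 * ε), ← Real.exp_add, neg_mul, sub_eq_add_neg]

section Derivative

variable {𝕜 E G : Type*} [NontriviallyNormedField 𝕜] [IsRCLikeNormedField 𝕜]
  [NormedAddCommGroup E] [NormedSpace ℝ E] [NormedSpace 𝕜 E]
  [NormedAddCommGroup G] [NormedSpace 𝕜 G] {s : Set E} {K : ℝ≥0}

lemma norm_image_sub_sub_fderiv_le_of_lipschitzOnWith {f : E → G} {f' : E → E →L[𝕜] G} {x y : E}
    (hs : Convex ℝ s) (hf : ∀ z ∈ s, HasFDerivWithinAt f (f' z) s z)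
    (hf' : LipschitzOnWith K f' s) (hx : x ∈ s) (hy : y ∈ s) :
    ‖f y - f x - f' x (y - x)‖ ≤ K * ‖y - x‖ ^ 2 := by
  have hsub : segment ℝ x y ⊆ s := hs.segment_subset hx hy
  have hbound : ∀ z ∈ segment ℝ x y, ‖f' z - f' x‖ ≤ K * ‖y - x‖ := fun z hz ↦
    (hf'.norm_sub_le (hsub hz) hx).trans <| by
      gcongr
      exact norm_sub_le_of_mem_segment hz
  have hmean := (convex_segment x y).norm_image_sub_le_of_norm_hasFDerivWithin_le'
    (fun z hz ↦ (hf z (hsub hz)).mono hsub) hbound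
    (left_mem_segment ℝ x y) (right_mem_segment ℝ x y)
  rwa [mul_assoc, ← sq] at hmean

lemma norm_image_sub_le_of_lipschitzOnWith_fderiv {f : E → G} {f' : E → E →L[𝕜] G} {x y : E}
    (hs : Convex ℝ s) (hf : ∀ z ∈ s, HasFDerivWithinAt f (f' z) s z)
    (hf' : LipschitzOnWith K f' s) (hx : x ∈ s) (hy : y ∈ s) :
    ‖f y - f x‖ ≤ ‖f' x‖ * ‖y - x‖ + K * ‖y - x‖ ^ 2 :=
  calc ‖f y - f x‖ ≤ ‖f' x (y - x)‖ + ‖f y - f x - f' x (y - x)‖ := norm_le_norm_add_norm_sub' _ _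
    _ ≤ ‖f' x‖ * ‖y - x‖ + K * ‖y - x‖ ^ 2 :=
      add_le_add ((f' x).le_opNorm _)
        (norm_image_sub_sub_fderiv_le_of_lipschitzOnWith hs hf hf' hx hy)

theorem negative_lyapunov_limit_implies_exponential_stability_general {f : ℕ → E → E}
    {f' : ℕ → E → E →L[𝕜] E} {x₀ : E} (hs : Convex ℝ s) (hmaps : ∀ n, Set.MapsTo (f n) s s)
    (hf : ∀ n, ∀ x ∈ s, HasFDerivWithinAt (f n) (f' n x) s x)
    (hf' : ∀ n, LipschitzOnWith K (f' n) s) (hx₀ : x₀ ∈ s)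
    (hgap : 2 * linearGrowthSup (fun n ↦ (logDerivSum f f' x₀ n : EReal)) <
      linearGrowthInf fun n ↦ (logDerivSum f f' x₀ n : EReal)) :
    ExpAsymptoticallyStableOn f s x₀ := by
  refine expAsymptoticallyStableOn_of_dist_le K.coe_nonneg hmaps (fun n y hy ↦ ?_) hgap
  have hderiv : ‖f' n (iterSeq f n x₀)‖ ≤
      Real.exp (logDerivSum f f' x₀ (n + 1) - logDerivSum f f' x₀ n) := by
    rw [logDerivSum, logDerivSum, Finset.sum_range_succ_sub_sum]
    exact Real.le_exp_log _
  simp only [dist_eq_norm]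
  refine (norm_image_sub_le_of_lipschitzOnWith_fderiv hs (hf n) (hf' n)
    (mapsTo_iterSeq hmaps n hx₀) hy).trans ?_
  gcongr

end Derivative

/-- Corollary 4.1: `I = [a,b]` a non-degenerate closed bounded interval, `f n : I → I`
C² maps with `{f'' n}` uniformly bounded on `I`.  If the limit
`λ(x0) = lim (1/n) ∑_{k<n} ln|f_k'(x_k)|` exists (limsup = liminf) and lies in
`(-∞, 0)`, then the system is exponentially asymptotically stable at `x0`. -/
theorem negative_lyapunov_limit_implies_exponential_stability
    (a b : ℝ) (hab : a < b) (f f' f'' : ℕ → ℝ → ℝ)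
    (hmaps : ∀ n, Set.MapsTo (f n) (Set.Icc a b) (Set.Icc a b))
    (hderiv : ∀ n, ∀ x ∈ Set.Icc a b, HasDerivWithinAt (f n) (f' n x) (Set.Icc a b) x)
    (hderiv2 : ∀ n, ∀ x ∈ Set.Icc a b, HasDerivWithinAt (f' n) (f'' n x) (Set.Icc a b) x)
    (hcont2 : ∀ n, ContinuousOn (f'' n) (Set.Icc a b))
    -- {f_n''} is uniformly bounded in I
    (M : ℝ) (hM : 0 < M) (hbd : ∀ n : ℕ, ∀ x ∈ Set.Icc a b, |f'' n x| ≤ M)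
    (x0 : ℝ) (hx0 : x0 ∈ Set.Icc a b)
    -- the limit exists: limsup = liminf
    (heq : lyapExpSup f f' x0 = lyapExpInf f f' x0)
    -- and -∞ < λ(x0) < 0
    (hgt : ⊥ < lyapExpSup f f' x0) (hlt : lyapExpSup f f' x0 < 0) :
    -- exponential asymptotical stability at x0
    ∃ δ > (0:ℝ), ∃ C > (0:ℝ), ∃ μ > (0:ℝ), ∀ n : ℕ, ∀ y0 ∈ Set.Icc a b,
      |y0 - x0| < δ → |iterSeq f n y0 - iterSeq f n x0| ≤ C * Real.exp (-μ * n) := by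
  have hgap : 2 * lyapExpSup f f' x0 < lyapExpInf f f' x0 :=
    heq ▸ ereal_two_mul_lt_self_iff.2 ⟨hgt, hlt⟩
  have hlip (n : ℕ) : LipschitzOnWith ⟨M, hM.le⟩ (f' n) (Set.Icc a b) :=
    (convex_Icc a b).lipschitzOnWith_of_nnnorm_hasDerivWithin_le (hderiv2 n) (hbd n)
  refine negative_lyapunov_limit_implies_exponential_stability_general (convex_Icc a b) hmaps
    (fun n x hx ↦ (hderiv n x hx).hasFDerivWithinAt)
    (fun n ↦ (ContinuousLinearMap.toSpanSingletonLIE ℝ ℝ).lipschitz.comp_lipschitzOnWith (hlip n))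
    hx0 ?_
  simpa only [lyapExpSup_eq_linearGrowthSup, lyapExpInf_eq_linearGrowthInf, logDerivSum,
    Function.comp_apply, ContinuousLinearMap.norm_toSpanSingleton] using hgap
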